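/- Projection of λπ-reductions to λσ: suppose Γ ⊢ M reduces to Σ ⊢ L by zero or more steps of the λπ-judgement reduction ⇝, (Γ ⊢ M) ⟹ U, and (Σ ⊢ L) ⟹ V. Then σ(U) λσ-reduces to σ(V) in zero or more steps, where σ(W) denotes the (unique) σ-normal form of a name-free term W. -/

import Mathlib

/- Named terms and substitutions of the λπ-calculus. Variables are natural numbers. -/
mutual
inductive Tm : Type
  | var : ℕ → Tm
  | app : Tm → Tm → Tm
  | lam : ℕ → Tm → Tm
  | clos : Subst → Tm → Tm
inductive Subst : Type
  | id : Subst
  | pi : ℕ → Subst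
  | cons : Subst → Tm → ℕ → Subst
  | comp : Subst → Subst → Subst
end

/- Contexts are lists of variables; the head of the list is the *rightmost* variable,
so the context `Γ, a` of the paper is `a :: Γ`. -/
mutual
/-- `WfTm Γ M` is the judgement `Γ ⊢ M`. -/
inductive WfTm : List ℕ → Tm → Prop
  | var (Γ : List ℕ) (a : ℕ) : WfTm (a :: Γ) (.var a)
  | weak {Γ : List ℕ} {a : ℕ} (b : ℕ) : a ≠ b → WfTm Γ (.var a) → WfTm (b :: Γ) (.var a)
  | app {Γ M N} : WfTm Γ M → WfTm Γ N → WfTm Γ (.app M N)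
  | lam {Γ a M} : WfTm (a :: Γ) M → WfTm Γ (.lam a M)
  | clos {Γ s Δ M} : WfSub Γ s Δ → WfTm Δ M → WfTm Γ (.clos s M)
/-- `WfSub Γ s Δ` is the judgement `Γ ⊢ s ▷ Δ`. -/
inductive WfSub : List ℕ → Subst → List ℕ → Prop
  | id (Γ) : WfSub Γ .id Γ
  | pi (Γ a) : WfSub (a :: Γ) (.pi a) Γ
  | cons {Γ s Δ N} (a) : WfSub Γ s Δ → WfTm Γ N → WfSub Γ (.cons s N a) (a :: Δ)
  | comp {Γ s Δ q Θ} : WfSub Γ s Δ → WfSub Δ q Θ → WfSub Γ (.comp s q) Θ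
end

/-- The operator `O_{λa}` on sequences of finite sets (sequences are 0-indexed:
index `n` corresponds to the paper's index `n+1`). -/
def Olam (a : ℕ) (A : ℕ → Finset ℕ) : ℕ → Finset ℕ
  | 0 => (A 0).erase a ∪ A 1
  | n + 1 => A (n + 2)

/-- The operator `O_π`. -/
def Opi (A : ℕ → Finset ℕ) : ℕ → Finset ℕ
  | 0 => ∅
  | n + 1 => A n

mutual
/-- The free-variable sequence of a term: `FV M n` is the paper's `FV_{n+1}(M)`. -/
def FV : Tm → ℕ → Finset ℕ
  | .var a => fun n => if n = 0 then {a} else ∅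
  | .app M N => fun n => FV M n ∪ FV N n
  | .lam a M => Olam a (FV M)
  | .clos s M => Osub s (FV M)
/-- The operator `O_s` associated with a substitution `s`. -/
def Osub : Subst → (ℕ → Finset ℕ) → (ℕ → Finset ℕ)
  | .id => fun A => A
  | .pi _ => fun A => Opi A
  | .cons s N a => fun A n => Osub s (Olam a A) n ∪ FV N n
  | .comp s q => fun A => Osub s (Osub q A)
end

/-- Iterated abstraction `λΓ.M` (recall the head of the list is the rightmost variable). -/
def lamCtx : List ℕ → Tm → Tm
  | [], M => M
  | a :: Γ, M => lamCtx Γ (.lam a M)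

/-- Free variables of a judgement: `FV(Γ ⊢ M) = FV(λΓ.M)`. -/
def FVJ (Γ : List ℕ) (M : Tm) : ℕ → Finset ℕ := FV (lamCtx Γ M)

/-- Iterated lifting `⇑_Δ(s)`. -/
def Uparrow : List ℕ → Subst → Subst
  | [], s => s
  | a :: Δ, s => .cons (.comp (.pi a) (Uparrow Δ s)) (.var a) a

/- One-step reduction of the λπ-calculus (compatible closure).  The Boolean
parameter tells whether the rule `Beta` is allowed: `StepTm true` is λπ-reduction,
`StepTm false` is σπα-reduction. -/
mutual
inductive StepTm : Bool → Tm → Tm → Prop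
  | beta {a : ℕ} {M N : Tm} :
      StepTm true (.app (.lam a M) N) (.clos (.cons .id N a) M)
  | abs {β : Bool} {s : Subst} {a : ℕ} {M : Tm} :
      StepTm β (.clos s (.lam a M))
        (.lam a (.clos (.cons (.comp (.pi a) s) (.var a) a) M))
  | app {β : Bool} {s : Subst} {M N : Tm} :
      StepTm β (.clos s (.app M N)) (.app (.clos s M) (.clos s N))
  | consVar {β : Bool} {s : Subst} {N : Tm} {a : ℕ} :
      StepTm β (.clos (.cons s N a) (.var a)) N
  | new {β : Bool} {s : Subst} {N : Tm} {a b : ℕ} : a ≠ b →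
      StepTm β (.clos (.cons s N a) (.var b)) (.clos s (.var b))
  | idVar {β : Bool} {a : ℕ} : StepTm β (.clos .id (.var a)) (.var a)
  | clos {β : Bool} {s q : Subst} {M : Tm} :
      StepTm β (.clos s (.clos q M)) (.clos (.comp s q) M)
  | pi1 {β : Bool} {a b : ℕ} : a ≠ b → StepTm β (.clos (.pi a) (.var b)) (.var b)
  | pi2 {β : Bool} {s : Subst} {a b : ℕ} : a ≠ b →
      StepTm β (.clos (.comp s (.pi a)) (.var b)) (.clos s (.var b))
  | alpha1 {β : Bool} {a b : ℕ} {M : Tm} :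
      (∃ i, a ∈ FV (.lam a M) i) → (∀ i, b ∉ FV (.lam a M) i) →
      StepTm β (.lam a M) (.lam b (.clos (.cons (.pi b) (.var b) a) M))
  | lamCong {β : Bool} {a : ℕ} {M₁ M₂ : Tm} :
      StepTm β M₁ M₂ → StepTm β (.lam a M₁) (.lam a M₂)
  | appL {β : Bool} {M₁ M₂ N : Tm} : StepTm β M₁ M₂ → StepTm β (.app M₁ N) (.app M₂ N)
  | appR {β : Bool} {M N₁ N₂ : Tm} : StepTm β N₁ N₂ → StepTm β (.app M N₁) (.app M N₂)
  | closL {β : Bool} {s₁ s₂ : Subst} {M : Tm} :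
      StepSub β s₁ s₂ → StepTm β (.clos s₁ M) (.clos s₂ M)
  | closR {β : Bool} {s : Subst} {M₁ M₂ : Tm} :
      StepTm β M₁ M₂ → StepTm β (.clos s M₁) (.clos s M₂)
inductive StepSub : Bool → Subst → Subst → Prop
  | ass {β : Bool} {s q r : Subst} :
      StepSub β (.comp s (.comp q r)) (.comp (.comp s q) r)
  | idR {β : Bool} {s : Subst} : StepSub β (.comp s .id) s
  | idShift {β : Bool} {a : ℕ} : StepSub β (.comp .id (.pi a)) (.pi a)
  | consShift {β : Bool} {s : Subst} {N : Tm} {a : ℕ} :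
      StepSub β (.comp (.cons s N a) (.pi a)) s
  | map {β : Bool} {s q : Subst} {N : Tm} {a : ℕ} :
      StepSub β (.comp s (.cons q N a)) (.cons (.comp s q) (.clos s N) a)
  | consL {β : Bool} {s₁ s₂ : Subst} {N : Tm} {a : ℕ} :
      StepSub β s₁ s₂ → StepSub β (.cons s₁ N a) (.cons s₂ N a)
  | consR {β : Bool} {s : Subst} {N₁ N₂ : Tm} {a : ℕ} :
      StepTm β N₁ N₂ → StepSub β (.cons s N₁ a) (.cons s N₂ a)
  | compL {β : Bool} {s₁ s₂ q : Subst} :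
      StepSub β s₁ s₂ → StepSub β (.comp s₁ q) (.comp s₂ q)
  | compR {β : Bool} {s q₁ q₂ : Subst} :
      StepSub β q₁ q₂ → StepSub β (.comp s q₁) (.comp s q₂)
end

/-- One-step reduction `⇝` on judgements `Γ ⊢ M`, including the rule `α₂`.
`StepJ true` is λπ, `StepJ false` is σπα. -/
inductive StepJ (β : Bool) : List ℕ × Tm → List ℕ × Tm → Prop
  | step {Γ : List ℕ} {M₁ M₂ : Tm} : StepTm β M₁ M₂ → StepJ β (Γ, M₁) (Γ, M₂)
  | alpha2 {Γ Δ : List ℕ} {a b : ℕ} {M : Tm} :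
      (∃ i, a ∈ FVJ (Δ ++ [a]) M i) → (∀ i, b ∉ FVJ (Δ ++ [a]) M i) →
      StepJ β (Δ ++ a :: Γ, M)
        (Δ ++ b :: Γ, .clos (Uparrow Δ (.cons (.pi b) (.var b) a)) M)

/- Name-free (de Bruijn) terms and substitutions. -/
mutual
inductive NTm : Type
  | one : NTm
  | app : NTm → NTm → NTm
  | lam : NTm → NTm
  | clos : NSub → NTm → NTm
inductive NSub : Type
  | id : NSub
  | pi : NSub
  | cons : NSub → NTm → NSub
  | comp : NSub → NSub → NSub
end

/-- `piIter n` is the left-nested composition of `n+1` copies of `π`. -/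
def piIter : ℕ → NSub
  | 0 => .pi
  | k + 1 => .comp (piIter k) .pi

/-- `dbr n` is the de Bruijn index `n+1̲`: `dbr 0 = 1` and
`dbr (n+1) = ((…(π∘π)∘…)∘π)∘1` with `n+1` occurrences of `π`. -/
def dbr : ℕ → NTm
  | 0 => .one
  | n + 1 => .clos (piIter n) .one

/- One-step reduction of λσ (`NStepTm true`) resp. σ (`NStepTm false`)
on name-free terms/substitutions. -/
mutual
inductive NStepTm : Bool → NTm → NTm → Prop
  | beta {U V : NTm} : NStepTm true (.app (.lam U) V) (.clos (.cons .id V) U)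
  | abs {β : Bool} {u : NSub} {U : NTm} :
      NStepTm β (.clos u (.lam U)) (.lam (.clos (.cons (.comp .pi u) .one) U))
  | app {β : Bool} {u : NSub} {U V : NTm} :
      NStepTm β (.clos u (.app U V)) (.app (.clos u U) (.clos u V))
  | consVar {β : Bool} {u : NSub} {V : NTm} : NStepTm β (.clos (.cons u V) .one) V
  | idVar {β : Bool} : NStepTm β (.clos .id .one) .one
  | clos {β : Bool} {u v : NSub} {U : NTm} :
      NStepTm β (.clos u (.clos v U)) (.clos (.comp u v) U)
  | lamCong {β : Bool} {U₁ U₂ : NTm} : NStepTm β U₁ U₂ → NStepTm β (.lam U₁) (.lam U₂)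
  | appL {β : Bool} {U₁ U₂ V : NTm} : NStepTm β U₁ U₂ → NStepTm β (.app U₁ V) (.app U₂ V)
  | appR {β : Bool} {U V₁ V₂ : NTm} : NStepTm β V₁ V₂ → NStepTm β (.app U V₁) (.app U V₂)
  | closL {β : Bool} {u₁ u₂ : NSub} {U : NTm} :
      NStepSub β u₁ u₂ → NStepTm β (.clos u₁ U) (.clos u₂ U)
  | closR {β : Bool} {u : NSub} {U₁ U₂ : NTm} :
      NStepTm β U₁ U₂ → NStepTm β (.clos u U₁) (.clos u U₂)
inductive NStepSub : Bool → NSub → NSub → Prop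
  | ass {β : Bool} {u v w : NSub} : NStepSub β (.comp u (.comp v w)) (.comp (.comp u v) w)
  | idR {β : Bool} {u : NSub} : NStepSub β (.comp u .id) u
  | idShift {β : Bool} : NStepSub β (.comp .id .pi) .pi
  | consShift {β : Bool} {u : NSub} {V : NTm} : NStepSub β (.comp (.cons u V) .pi) u
  | map {β : Bool} {u v : NSub} {V : NTm} :
      NStepSub β (.comp u (.cons v V)) (.cons (.comp u v) (.clos u V))
  | consL {β : Bool} {u₁ u₂ : NSub} {V : NTm} :
      NStepSub β u₁ u₂ → NStepSub β (.cons u₁ V) (.cons u₂ V)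
  | consR {β : Bool} {u : NSub} {V₁ V₂ : NTm} :
      NStepTm β V₁ V₂ → NStepSub β (.cons u V₁) (.cons u V₂)
  | compL {β : Bool} {u₁ u₂ v : NSub} :
      NStepSub β u₁ u₂ → NStepSub β (.comp u₁ v) (.comp u₂ v)
  | compR {β : Bool} {u v₁ v₂ : NSub} :
      NStepSub β v₁ v₂ → NStepSub β (.comp u v₁) (.comp u v₂)
end

/- The correspondence `(Γ ⊢ M) ⟹ U` resp. `(Γ ⊢ s ▷ Δ) ⟹ u` between judgements and
name-free terms/substitutions (Definition 7.6 of the paper). -/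
mutual
inductive TrTm : List ℕ → Tm → NTm → Prop
  | var (Γ : List ℕ) (a : ℕ) : TrTm (a :: Γ) (.var a) (dbr 0)
  | weak {Γ : List ℕ} {a : ℕ} {n : ℕ} (b : ℕ) : a ≠ b →
      TrTm Γ (.var a) (dbr n) → TrTm (b :: Γ) (.var a) (dbr (n + 1))
  | app {Γ M N U V} : TrTm Γ M U → TrTm Γ N V → TrTm Γ (.app M N) (.app U V)
  | lam {Γ a M U} : TrTm (a :: Γ) M U → TrTm Γ (.lam a M) (.lam U)
  | clos {Γ s Δ M u U} : TrSub Γ s Δ u → TrTm Δ M U → TrTm Γ (.clos s M) (.clos u U)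
inductive TrSub : List ℕ → Subst → List ℕ → NSub → Prop
  | id (Γ) : TrSub Γ .id Γ .id
  | pi (Γ a) : TrSub (a :: Γ) (.pi a) Γ .pi
  | cons {Γ s Δ N u V} (a) : TrSub Γ s Δ u → TrTm Γ N V →
      TrSub Γ (.cons s N a) (a :: Δ) (.cons u V)
  | comp {Γ s Δ q Θ u v} : TrSub Γ s Δ u → TrSub Δ q Θ v →
      TrSub Γ (.comp s q) Θ (.comp u v)
end


/-!
Interpret a name-free term as the pure de Bruijn λ-term obtained by carrying out all its explicit
substitutions. The rules of σ do not change this value, every name-free term σ-reduces to its value,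
and so every σ-normal form is its own value; a β-step between values is a λσ-step `Beta` followed by
σ-steps. On the named side, every reduction step of a judgement leaves the value of the
translation unchanged, except that `Beta` contracts copies of a redex in it. In particular both
α-rules are invisible, because they insert a substitution whose value is the identity.
-/

section Scons

/-- The sequence `a, s 0, s 1, …`. -/
def scons {α : Type*} (a : α) (s : ℕ → α) : ℕ → α
  | 0 => a
  | n + 1 => s n

variable {α β : Type*}

theorem comp_scons (f : α → β) (a : α) (s : ℕ → α) : f ∘ scons a s = scons (f a) (f ∘ s) := by
  funext n; cases n <;> rfl

theorem scons_zero_comp_succ (s : ℕ → α) : scons (s 0) (s ∘ Nat.succ) = s := by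
  funext n; cases n <;> rfl

end Scons

/-- Pure λ-terms in de Bruijn notation, without explicit substitutions; indices start at `0`. -/
inductive PureTm : Type
  | var : ℕ → PureTm
  | app : PureTm → PureTm → PureTm
  | lam : PureTm → PureTm

namespace PureTm

/-- Simultaneous renaming of the free indices. -/
def rename : (ℕ → ℕ) → PureTm → PureTm
  | f, var n => var (f n)
  | f, app t u => app (rename f t) (rename f u)
  | f, lam t => lam (rename (scons 0 (Nat.succ ∘ f)) t)

/-- The lifting of a substitution under one binder. -/
def up (s : ℕ → PureTm) : ℕ → PureTm := scons (var 0) (rename Nat.succ ∘ s)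

/-- Simultaneous capture-avoiding substitution. -/
def subst : (ℕ → PureTm) → PureTm → PureTm
  | s, var n => s n
  | s, app t u => app (subst s t) (subst s u)
  | s, lam t => lam (subst (up s) t)

theorem up_var_comp (f : ℕ → ℕ) : up (var ∘ f) = var ∘ scons 0 (Nat.succ ∘ f) := by
  rw [comp_scons]; rfl

theorem up_var : up var = var := scons_zero_comp_succ var

theorem up_comp_scons (f : ℕ → ℕ) (s : ℕ → PureTm) :
    up s ∘ scons 0 (Nat.succ ∘ f) = up (s ∘ f) := by
  rw [comp_scons]; rfl

theorem rename_eq_subst (f : ℕ → ℕ) (t : PureTm) : rename f t = subst (var ∘ f) t := by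
  induction t generalizing f with
  | var n => rfl
  | app t u iht ihu => simp only [rename, subst, iht, ihu]
  | lam t ih => simp only [rename, subst, ih, up_var_comp]

theorem subst_rename (s : ℕ → PureTm) (f : ℕ → ℕ) (t : PureTm) :
    subst s (rename f t) = subst (s ∘ f) t := by
  induction t generalizing s f with
  | var n => rfl
  | app t u iht ihu => simp only [rename, subst, iht, ihu]
  | lam t ih => simp only [rename, subst, ih, up_comp_scons]

theorem rename_rename (f g : ℕ → ℕ) (t : PureTm) : rename f (rename g t) = rename (f ∘ g) t := by
  rw [rename_eq_subst, subst_rename, rename_eq_subst, Function.comp_assoc]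

theorem rename_comp_up (f : ℕ → ℕ) (s : ℕ → PureTm) :
    rename (scons 0 (Nat.succ ∘ f)) ∘ up s = up (rename f ∘ s) := by
  rw [up, comp_scons, up]
  congr 1
  funext n
  simp only [Function.comp_apply, rename_rename]
  rfl

theorem rename_subst (f : ℕ → ℕ) (s : ℕ → PureTm) (t : PureTm) :
    rename f (subst s t) = subst (rename f ∘ s) t := by
  induction t generalizing s f with
  | var n => rfl
  | app t u iht ihu => simp only [rename, subst, iht, ihu]
  | lam t ih => simp only [rename, subst, ih, rename_comp_up]

theorem subst_up_comp_up (s r : ℕ → PureTm) : subst (up s) ∘ up r = up (subst s ∘ r) := by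
  rw [up, up, comp_scons, up]
  congr 1
  funext n
  simp only [Function.comp_apply, subst_rename, rename_subst]
  rfl

theorem subst_subst (s r : ℕ → PureTm) (t : PureTm) :
    subst s (subst r t) = subst (subst s ∘ r) t := by
  induction t generalizing s r with
  | var n => rfl
  | app t u iht ihu => simp only [subst, iht, ihu]
  | lam t ih => simp only [subst, ih, subst_up_comp_up]

theorem subst_var (t : PureTm) : subst var t = t := by
  induction t with
  | var n => rfl
  | app t u iht ihu => simp only [subst, iht, ihu]
  | lam t ih => simp only [subst, up_var, ih]

theorem subst_subst_scons_var (s : ℕ → PureTm) (t u : PureTm) :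
    subst s (subst (scons u var) t) = subst (scons (subst s u) var) (subst (up s) t) := by
  rw [subst_subst, subst_subst, comp_scons, up, comp_scons]
  congr 2
  funext n
  simp only [Function.comp_apply, subst_rename]
  exact (subst_var (s n)).symm

/-- One-step β-reduction. As in the calculi with explicit substitutions, the Boolean tells whether
β may be contracted, so that `Step false` is the empty relation. -/
inductive Step : Bool → PureTm → PureTm → Prop
  | beta {t u : PureTm} : Step true (app (lam t) u) (subst (scons u var) t)
  | lam {β : Bool} {t t' : PureTm} : Step β t t' → Step β (lam t) (lam t')
  | appL {β : Bool} {t t' u : PureTm} : Step β t t' → Step β (app t u) (app t' u)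
  | appR {β : Bool} {t u u' : PureTm} : Step β u u' → Step β (app t u) (app t u')

/-- Many-step β-reduction. -/
abbrev Reduces (β : Bool) : PureTm → PureTm → Prop := Relation.ReflTransGen (Step β)

variable {β : Bool} {t t' u u' : PureTm}

theorem Step.subst (h : Step β t t') (s : ℕ → PureTm) : Step β (t.subst s) (t'.subst s) := by
  induction h generalizing s with
  | beta => rw [subst_subst_scons_var]; exact .beta
  | lam _ ih => exact .lam (ih _)
  | appL _ ih => exact .appL (ih s)
  | appR _ ih => exact .appR (ih s)

namespace Reduces

theorem of_eq (h : t = t') : Reduces β t t' := h ▸ .refl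

theorem lam (h : Reduces β t t') : Reduces β t.lam t'.lam := h.lift _ fun _ _ => .lam

theorem app (ht : Reduces β t t') (hu : Reduces β u u') : Reduces β (t.app u) (t'.app u') :=
  (ht.lift (·.app u) fun _ _ => .appL).trans (hu.lift t'.app fun _ _ => .appR)

theorem subst (h : Reduces β t t') (s : ℕ → PureTm) : Reduces β (t.subst s) (t'.subst s) :=
  h.lift _ fun _ _ h => h.subst s

theorem rename (h : Reduces β t t') (f : ℕ → ℕ) : Reduces β (t.rename f) (t'.rename f) := by
  simpa only [rename_eq_subst] using h.subst (var ∘ f)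

variable {s s' : ℕ → PureTm}

theorem scons (ht : Reduces β t t') (hs : ∀ n, Reduces β (s n) (s' n)) :
    ∀ n, Reduces β (scons t s n) (scons t' s' n)
  | 0 => ht
  | n + 1 => hs n

theorem subst_congr (t : PureTm) (hs : ∀ n, Reduces β (s n) (s' n)) :
    Reduces β (t.subst s) (t.subst s') := by
  induction t generalizing s s' with
  | var n => exact hs n
  | app t u iht ihu => exact (iht hs).app (ihu hs)
  | lam t ih => exact (ih (scons .refl fun n => (hs n).rename _)).lam

end Reduces

end PureTm

/-! ### Evaluation of name-free terms -/

/-- Many-step reduction of name-free terms: λσ for `true`, σ for `false`. -/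
abbrev NTm.Reduces (β : Bool) : NTm → NTm → Prop := Relation.ReflTransGen (NStepTm β)

/-- Many-step reduction of name-free substitutions: λσ for `true`, σ for `false`. -/
abbrev NSub.Reduces (β : Bool) : NSub → NSub → Prop := Relation.ReflTransGen (NStepSub β)

mutual
/-- The value of a name-free term: the pure term denoted by it. -/
def NTm.eval : NTm → PureTm
  | .one => .var 0
  | .app U V => .app U.eval V.eval
  | .lam U => .lam U.eval
  | .clos u U => U.eval.subst u.eval
/-- The value of a name-free substitution: the sequence of pure terms substituted for the
indices. -/
def NSub.eval : NSub → ℕ → PureTm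
  | .id => .var
  | .pi => .var ∘ Nat.succ
  | .cons u V => scons V.eval u.eval
  | .comp u v => PureTm.subst u.eval ∘ v.eval
end

namespace NSub

theorem eval_lift (u : NSub) : (cons (comp pi u) .one).eval = PureTm.up u.eval := by
  simp only [eval, NTm.eval, PureTm.up, Function.comp_def, PureTm.rename_eq_subst]

theorem eval_cons_pi_one : (cons pi .one).eval = PureTm.var := scons_zero_comp_succ PureTm.var

theorem eval_piIter (n k : ℕ) : (piIter n).eval k = .var (k + (n + 1)) := by
  induction n generalizing k with
  | zero => rfl
  | succ n ih => simp only [piIter, eval, Function.comp_apply, PureTm.subst, ih]; congr 1; lia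

end NSub

namespace NTm

theorem eval_dbr (n : ℕ) : (dbr n).eval = .var n := by
  cases n with
  | zero => rfl
  | succ n => simp only [dbr, eval, PureTm.subst, NSub.eval_piIter, Nat.zero_add]

theorem dbr_injective : Function.Injective dbr := fun m n h => by
  simpa only [eval_dbr, PureTm.var.injEq] using congrArg eval h

theorem eval_clos_dbr (u : NSub) (n : ℕ) : (clos u (dbr n)).eval = u.eval n := by
  simp only [eval, eval_dbr, PureTm.subst]

end NTm

mutual
theorem NStepTm.eval_eq : ∀ {U V : NTm}, NStepTm false U V → U.eval = V.eval
  | _, _, .abs => by simp only [NTm.eval, PureTm.subst, NSub.eval_lift]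
  | _, _, .app => rfl
  | _, _, .consVar => rfl
  | _, _, .idVar => rfl
  | _, _, .clos => PureTm.subst_subst _ _ _
  | _, _, .lamCong h => by simp only [NTm.eval, h.eval_eq]
  | _, _, .appL h => by simp only [NTm.eval, h.eval_eq]
  | _, _, .appR h => by simp only [NTm.eval, h.eval_eq]
  | _, _, .closL h => by simp only [NTm.eval, h.eval_eq]
  | _, _, .closR h => by simp only [NTm.eval, h.eval_eq]
theorem NStepSub.eval_eq : ∀ {u v : NSub}, NStepSub false u v → u.eval = v.eval
  | _, _, .ass => by simp only [NSub.eval, Function.comp_def, PureTm.subst_subst]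
  | _, _, .idR => rfl
  | _, _, .idShift => rfl
  | _, _, .consShift => rfl
  | _, _, .map => comp_scons _ _ _
  | _, _, .consL h => by simp only [NSub.eval, h.eval_eq]
  | _, _, .consR h => by simp only [NSub.eval, h.eval_eq]
  | _, _, .compL h => by simp only [NSub.eval, h.eval_eq]
  | _, _, .compR h => by simp only [NSub.eval, h.eval_eq]
end

theorem NTm.Reduces.eval_eq {U V : NTm} (h : U.Reduces false V) : U.eval = V.eval := by
  induction h with
  | refl => rfl
  | tail _ h ih => exact ih.trans h.eval_eq

mutual
theorem NStepTm.of_sigma {β : Bool} : ∀ {U V : NTm}, NStepTm false U V → NStepTm β U V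
  | _, _, .abs => .abs
  | _, _, .app => .app
  | _, _, .consVar => .consVar
  | _, _, .idVar => .idVar
  | _, _, .clos => .clos
  | _, _, .lamCong h => .lamCong h.of_sigma
  | _, _, .appL h => .appL h.of_sigma
  | _, _, .appR h => .appR h.of_sigma
  | _, _, .closL h => .closL h.of_sigma
  | _, _, .closR h => .closR h.of_sigma
theorem NStepSub.of_sigma {β : Bool} : ∀ {u v : NSub}, NStepSub false u v → NStepSub β u v
  | _, _, .ass => .ass
  | _, _, .idR => .idR
  | _, _, .idShift => .idShift
  | _, _, .consShift => .consShift
  | _, _, .map => .map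
  | _, _, .consL h => .consL h.of_sigma
  | _, _, .consR h => .consR h.of_sigma
  | _, _, .compL h => .compL h.of_sigma
  | _, _, .compR h => .compR h.of_sigma
end

section Congruence

variable {β : Bool} {U U' V V' : NTm} {u u' v v' : NSub}

theorem NTm.Reduces.of_sigma (h : U.Reduces false V) : U.Reduces β V :=
  h.lift id fun _ _ => NStepTm.of_sigma

theorem NTm.Reduces.lam (h : U.Reduces β U') : U.lam.Reduces β U'.lam :=
  h.lift _ fun _ _ => .lamCong

theorem NTm.Reduces.app (hU : U.Reduces β U') (hV : V.Reduces β V') :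
    (U.app V).Reduces β (U'.app V') :=
  (hU.lift (·.app V) fun _ _ => .appL).trans (hV.lift U'.app fun _ _ => .appR)

theorem NTm.Reduces.clos (hu : u.Reduces β u') (hU : U.Reduces β U') :
    (clos u U).Reduces β (clos u' U') :=
  (hu.lift (NTm.clos · U) fun _ _ => .closL).trans (hU.lift (NTm.clos u') fun _ _ => .closR)

theorem NSub.Reduces.cons (hu : u.Reduces β u') (hV : V.Reduces β V') :
    (u.cons V).Reduces β (u'.cons V') :=
  (hu.lift (·.cons V) fun _ _ => .consL).trans (hV.lift u'.cons fun _ _ => .consR)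

theorem NSub.Reduces.comp (hu : u.Reduces β u') (hv : v.Reduces β v') :
    (u.comp v).Reduces β (u'.comp v') :=
  (hu.lift (·.comp v) fun _ _ => .compL).trans (hv.lift u'.comp fun _ _ => .compR)

end Congruence

/-! ### Normalization of σ -/

/-- The name-free term representing a pure term; these are the σ-normal forms. -/
def PureTm.quote : PureTm → NTm
  | var n => dbr n
  | app t u => .app t.quote u.quote
  | lam t => .lam t.quote

theorem PureTm.eval_quote (t : PureTm) : t.quote.eval = t := by
  induction t with
  | var n => exact NTm.eval_dbr n
  | app t u iht ihu => simp only [quote, NTm.eval, iht, ihu]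
  | lam t ih => simp only [quote, NTm.eval, ih]

/-- σ-normal substitutions all of whose entries represent elements of `E`. For `E` the set of
variables these are renamings, which have to be pushed through terms before general substitutions
can be. -/
inductive NSub.Normal (E : Set PureTm) : NSub → Prop
  | id : Normal E id
  | piIter (n : ℕ) : Normal E (piIter n)
  | cons {u : NSub} {t : PureTm} : Normal E u → t ∈ E → Normal E (cons u t.quote)

/-- `U` has a σ-normal form, and it represents an element of `E`. -/
def NTm.NormalizesIn (E : Set PureTm) (U : NTm) : Prop :=
  ∃ t ∈ E, U.Reduces false t.quote

/-- `u` has a σ-normal form, and its entries represent elements of `E`. -/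
def NSub.NormalizesIn (E : Set PureTm) (u : NSub) : Prop :=
  ∃ v, Normal E v ∧ u.Reduces false v

section Normalization

variable {E : Set PureTm} {U V : NTm} {u v : NSub}

theorem NTm.NormalizesIn.of_reduces (h : U.Reduces false V) (hV : V.NormalizesIn E) :
    U.NormalizesIn E :=
  let ⟨t, ht, hVt⟩ := hV
  ⟨t, ht, h.trans hVt⟩

theorem NSub.NormalizesIn.of_reduces (h : u.Reduces false v) (hv : v.NormalizesIn E) :
    u.NormalizesIn E :=
  let ⟨w, hw, hvw⟩ := hv
  ⟨w, hw, h.trans hvw⟩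

namespace NSub.Normal

theorem comp_pi (hu : Normal E u) : (comp u pi).NormalizesIn E := by
  cases hu with
  | id => exact ⟨pi, .piIter 0, .single .idShift⟩
  | piIter n => exact ⟨_, .piIter (n + 1), .refl⟩
  | cons hu _ => exact ⟨_, hu, .single .consShift⟩

theorem comp_piIter (hu : Normal E u) (n : ℕ) : (comp u (_root_.piIter n)).NormalizesIn E := by
  induction n with
  | zero => exact hu.comp_pi
  | succ n ih =>
    obtain ⟨v, hv, huv⟩ := ih
    exact hv.comp_pi.of_reduces (.head .ass (huv.comp .refl))

theorem clos_one (hE : Set.range PureTm.var ⊆ E) (hu : Normal E u) :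
    (NTm.clos u .one).NormalizesIn E := by
  cases hu with
  | id => exact ⟨.var 0, hE ⟨0, rfl⟩, .single .idVar⟩
  | piIter n => exact ⟨.var (n + 1), hE ⟨n + 1, rfl⟩, .refl⟩
  | @cons _ t _ ht => exact ⟨t, ht, .single .consVar⟩

theorem clos_dbr (hE : Set.range PureTm.var ⊆ E) (hu : Normal E u) (n : ℕ) :
    (NTm.clos u (dbr n)).NormalizesIn E := by
  cases n with
  | zero => exact hu.clos_one hE
  | succ n =>
    obtain ⟨v, hv, huv⟩ := hu.comp_piIter n
    exact (hv.clos_one hE).of_reduces (.head .clos (NTm.Reduces.clos huv .refl))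

theorem clos_quote (hE : Set.range PureTm.var ⊆ E)
    (hpi : ∀ u, Normal E u → (comp pi u).NormalizesIn E) (hu : Normal E u) (t : PureTm) :
    (NTm.clos u t.quote).NormalizesIn Set.univ := by
  induction t generalizing u with
  | var n =>
    obtain ⟨t, _, ht⟩ := hu.clos_dbr hE n
    exact ⟨t, trivial, ht⟩
  | app t₁ t₂ ih₁ ih₂ =>
    obtain ⟨t₁', _, h₁⟩ := ih₁ hu
    obtain ⟨t₂', _, h₂⟩ := ih₂ hu
    exact ⟨.app t₁' t₂', trivial, .head .app (h₁.app h₂)⟩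
  | lam t ih =>
    obtain ⟨v, hv, huv⟩ := hpi u hu
    obtain ⟨t', _, ht⟩ := ih (cons (t := .var 0) hv (hE ⟨0, rfl⟩))
    have hbody : (NTm.clos (.cons (.comp pi u) .one) t.quote).Reduces false t'.quote :=
      (NTm.Reduces.clos (huv.cons .refl) .refl).trans ht
    exact ⟨.lam t', trivial, .head .abs hbody.lam⟩

theorem comp (hu : Normal E u)
    (hclos : ∀ t ∈ E, (NTm.clos u t.quote).NormalizesIn E) (hv : Normal E v) :
    (NSub.comp u v).NormalizesIn E := by
  induction hv with
  | id => exact ⟨u, hu, .single .idR⟩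
  | piIter n => exact hu.comp_piIter n
  | @cons v t _ ht ih =>
    obtain ⟨w, hw, huvw⟩ := ih
    obtain ⟨t', ht', hut⟩ := hclos t ht
    exact ⟨_, .cons hw ht', .head .map (huvw.cons hut)⟩

theorem pi_comp_of_range_var (hu : Normal (Set.range PureTm.var) u) :
    (NSub.comp pi u).NormalizesIn (Set.range PureTm.var) :=
  comp (.piIter 0) (Set.forall_mem_range.2 (clos_dbr subset_rfl (.piIter 0))) hu

theorem pi_comp (hu : Normal Set.univ u) : (NSub.comp pi u).NormalizesIn Set.univ :=
  comp (.piIter 0)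
    (fun t _ => clos_quote subset_rfl (fun _ => pi_comp_of_range_var) (.piIter 0) t) hu

end NSub.Normal

mutual
theorem NTm.normalizesIn_univ : ∀ U : NTm, U.NormalizesIn Set.univ
  | .one => ⟨.var 0, trivial, .refl⟩
  | .app U V =>
    let ⟨t, _, hU⟩ := U.normalizesIn_univ
    let ⟨t', _, hV⟩ := V.normalizesIn_univ
    ⟨.app t t', trivial, hU.app hV⟩
  | .lam U =>
    let ⟨t, _, hU⟩ := U.normalizesIn_univ
    ⟨.lam t, trivial, hU.lam⟩
  | .clos u U =>
    let ⟨t, _, hU⟩ := U.normalizesIn_univ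
    let ⟨_, hv, huv⟩ := u.normalizesIn_univ
    .of_reduces (.clos huv hU) (hv.clos_quote (Set.subset_univ _) (fun _ => NSub.Normal.pi_comp) t)
theorem NSub.normalizesIn_univ : ∀ u : NSub, u.NormalizesIn Set.univ
  | .id => ⟨.id, .id, .refl⟩
  | .pi => ⟨.pi, .piIter 0, .refl⟩
  | .cons u V =>
    let ⟨_, _, hV⟩ := V.normalizesIn_univ
    let ⟨_, hv, huv⟩ := u.normalizesIn_univ
    ⟨_, .cons hv trivial, huv.cons hV⟩
  | .comp u v =>
    let ⟨_, hu, huu⟩ := u.normalizesIn_univ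
    let ⟨_, hv, hvv⟩ := v.normalizesIn_univ
    .of_reduces (huu.comp hvv) (hu.comp
      (fun t _ => hu.clos_quote (Set.subset_univ _) (fun _ => NSub.Normal.pi_comp) t) hv)
end

theorem NTm.reduces_quote_eval (U : NTm) : U.Reduces false U.eval.quote := by
  obtain ⟨t, _, ht⟩ := U.normalizesIn_univ
  rwa [ht.eval_eq, PureTm.eval_quote]

theorem NTm.eq_quote_eval_of_normal (hU : ∀ W, ¬ NStepTm false U W) : U = U.eval.quote :=
  U.reduces_quote_eval.cases_head.resolve_right fun ⟨W, hW, _⟩ => hU W hW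

end Normalization

namespace PureTm

variable {β : Bool} {t t' : PureTm}

theorem Step.quote (h : Step β t t') : t.quote.Reduces β t'.quote := by
  induction h with
  | @beta t u =>
    have hσ := (NTm.clos (.cons .id u.quote) t.quote).reduces_quote_eval
    simp only [NTm.eval, NSub.eval, eval_quote] at hσ
    exact .head .beta hσ.of_sigma
  | lam _ ih => exact ih.lam
  | appL _ ih => exact ih.app .refl
  | appR _ ih => exact .app .refl ih

theorem Reduces.quote (h : Reduces β t t') : t.quote.Reduces β t'.quote := by
  induction h with
  | refl => exact .refl
  | tail _ h ih => exact ih.trans h.quote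

end PureTm

/-! ### Translation of named judgements -/

namespace TrTm

variable {Γ : List ℕ} {a b : ℕ} {U V : NTm}

theorem eq_dbr_idxOf (h : TrTm Γ (.var a) U) : U = dbr (Γ.idxOf a) := by
  induction Γ generalizing U with
  | nil => cases h
  | cons b Γ ih =>
    cases h with
    | var => rw [List.idxOf_cons_self]
    | weak _ hab h =>
      rw [List.idxOf_cons_ne _ hab.symm, NTm.dbr_injective (ih h)]

theorem var_cons_iff (hab : a ≠ b) :
    TrTm (b :: Γ) (.var a) V ↔ ∃ n, V = dbr (n + 1) ∧ TrTm Γ (.var a) (dbr n) := by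
  constructor
  · rintro (_ | ⟨_, _, h⟩)
    · exact absurd rfl hab
    · exact ⟨_, rfl, h⟩
  · rintro ⟨n, rfl, h⟩
    exact .weak b hab h

end TrTm

mutual
theorem TrTm.unique : ∀ {M : Tm} {Γ : List ℕ} {U V : NTm}, TrTm Γ M U → TrTm Γ M V → U = V
  | .var _, _, _, _, h, h' => h.eq_dbr_idxOf.trans h'.eq_dbr_idxOf.symm
  | .app _ _, _, _, _, .app hM hN, .app hM' hN' => by rw [hM.unique hM', hN.unique hN']
  | .lam _ _, _, _, _, .lam h, .lam h' => by rw [h.unique h']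
  | .clos _ _, _, _, _, .clos hs hM, .clos hs' hM' => by
    obtain ⟨rfl, rfl⟩ := hs.unique hs'
    rw [hM.unique hM']
theorem TrSub.unique : ∀ {s : Subst} {Γ Δ Δ' : List ℕ} {u v : NSub},
    TrSub Γ s Δ u → TrSub Γ s Δ' v → Δ = Δ' ∧ u = v
  | .id, _, _, _, _, _, .id _, .id _ => ⟨rfl, rfl⟩
  | .pi _, _, _, _, _, _, .pi _ _, .pi _ _ => ⟨rfl, rfl⟩
  | .cons _ _ _, _, _, _, _, _, .cons _ hs hN, .cons _ hs' hN' => by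
    obtain ⟨rfl, rfl⟩ := hs.unique hs'
    exact ⟨rfl, by rw [hN.unique hN']⟩
  | .comp _ _, _, _, _, _, _, .comp hs hq, .comp hs' hq' => by
    obtain ⟨rfl, rfl⟩ := hs.unique hs'
    obtain ⟨rfl, rfl⟩ := hq.unique hq'
    exact ⟨rfl, rfl⟩
end

/-! ### Projection of reductions -/

/-- The judgement `Γ ⊢ N` has a translation whose value is a reduct of the value of `U`. -/
def ProjectsTm (β : Bool) (Γ : List ℕ) (N : Tm) (U : NTm) : Prop :=
  ∃ V, TrTm Γ N V ∧ U.eval.Reduces β V.eval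

/-- The judgement `Γ ⊢ q ▷ Δ` has a translation whose value is an entrywise reduct of the value
of `u`. -/
def ProjectsSub (β : Bool) (Γ : List ℕ) (q : Subst) (Δ : List ℕ) (u : NSub) : Prop :=
  ∃ v, TrSub Γ q Δ v ∧ ∀ n, (u.eval n).Reduces β (v.eval n)

section Projects

variable {β : Bool} {Γ Δ : List ℕ} {s : Subst} {M N : Tm} {u v : NSub} {U V : NTm} {a b : ℕ}

theorem ProjectsTm.of_eval_eq (hV : TrTm Γ N V) (h : U.eval = V.eval) : ProjectsTm β Γ N U :=
  ⟨V, hV, .of_eq h⟩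

theorem ProjectsSub.of_eval_eq (hv : TrSub Γ s Δ v) (h : u.eval = v.eval) :
    ProjectsSub β Γ s Δ u :=
  ⟨v, hv, fun n => .of_eq (congrFun h n)⟩

theorem ProjectsTm.consVar (hN : TrTm Γ N V) (hU : TrTm (a :: Δ) (.var a) U) :
    ProjectsTm β Γ N (.clos (.cons u V) U) := by
  obtain rfl : U = .one := hU.unique (.var Δ a)
  exact .of_eval_eq hN (NStepTm.eval_eq .consVar)

theorem ProjectsTm.new (hab : a ≠ b) (hs : TrSub Γ s Δ u) (hU : TrTm (a :: Δ) (.var b) U) :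
    ProjectsTm β Γ (.clos s (.var b)) (.clos (.cons u V) U) := by
  obtain ⟨n, rfl, hn⟩ := (TrTm.var_cons_iff hab.symm).1 hU
  exact .of_eval_eq (.clos hs hn) (by simp only [NTm.eval_clos_dbr]; rfl)

theorem ProjectsTm.pi1 (hab : a ≠ b) (hU : TrTm Γ (.var b) U) :
    ProjectsTm β (a :: Γ) (.var b) (.clos .pi U) := by
  obtain rfl := hU.eq_dbr_idxOf
  exact .of_eval_eq (.weak a hab.symm hU) (by rw [NTm.eval_clos_dbr, NTm.eval_dbr]; rfl)

theorem ProjectsTm.pi2 (hab : a ≠ b) (hs : TrSub Γ s (a :: Δ) u) (hU : TrTm Δ (.var b) U) :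
    ProjectsTm β Γ (.clos s (.var b)) (.clos (.comp u .pi) U) := by
  obtain rfl := hU.eq_dbr_idxOf
  exact .of_eval_eq (.clos hs (.weak a hab.symm hU)) (by simp only [NTm.eval_clos_dbr]; rfl)

theorem ProjectsTm.clos_of_eval_eq_var (hs : TrSub Γ s Δ u) (hu : u.eval = PureTm.var)
    (hM : TrTm Δ M U) : ProjectsTm β Γ (.clos s M) U :=
  .of_eval_eq (.clos hs hM) (by rw [NTm.eval, hu, PureTm.subst_var])

theorem ProjectsTm.lam (h : ProjectsTm β (a :: Γ) M U) : ProjectsTm β Γ (.lam a M) (.lam U) :=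
  let ⟨_, hV, hUV⟩ := h
  ⟨_, .lam hV, hUV.lam⟩

end Projects

theorem TrSub.cons_pi_var (Γ : List ℕ) (a b : ℕ) :
    TrSub (b :: Γ) (.cons (.pi b) (.var b) a) (a :: Γ) (.cons .pi .one) :=
  .cons a (.pi Γ b) (.var Γ b)

mutual
theorem StepTm.projects : ∀ {β : Bool} {M N : Tm}, StepTm β M N →
    ∀ {Γ : List ℕ} {U : NTm}, TrTm Γ M U → ProjectsTm β Γ N U
  | _, _, _, .beta, _, _, .app (.lam hM) hN => ⟨_, .clos (.cons _ (.id _) hN) hM, .single .beta⟩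
  | _, _, _, .abs, _, _, .clos hs (.lam hM) =>
    .of_eval_eq (.lam (.clos (.cons _ (.comp (.pi _ _) hs) (.var _ _)) hM)) (NStepTm.eval_eq .abs)
  | _, _, _, .app, _, _, .clos hs (.app hM hN) =>
    .of_eval_eq (.app (.clos hs hM) (.clos hs hN)) (NStepTm.eval_eq .app)
  | _, _, _, .consVar, _, _, .clos (.cons _ _ hN) hU => .consVar hN hU
  | _, _, _, .new hab, _, _, .clos (.cons _ hs _) hU => .new hab hs hU
  | _, _, _, .idVar, _, _, .clos (.id _) hU => .of_eval_eq hU (PureTm.subst_var _)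
  | _, _, _, .clos, _, _, .clos hs (.clos hq hM) =>
    .of_eval_eq (.clos (.comp hs hq) hM) (NStepTm.eval_eq .clos)
  | _, _, _, .pi1 hab, _, _, .clos (.pi _ _) hU => .pi1 hab hU
  | _, _, _, .pi2 hab, _, _, .clos (.comp hs (.pi _ _)) hU => .pi2 hab hs hU
  | _, _, _, .alpha1 _ _, _, _, .lam hM =>
    .lam (.clos_of_eval_eq_var (.cons_pi_var _ _ _) NSub.eval_cons_pi_one hM)
  | _, _, _, .lamCong h, _, _, .lam hM => (h.projects hM).lam
  | _, _, _, .appL h, _, _, .app hM hN =>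
    let ⟨_, hV, hUV⟩ := h.projects hM
    ⟨_, .app hV hN, hUV.app .refl⟩
  | _, _, _, .appR h, _, _, .app hM hN =>
    let ⟨_, hV, hUV⟩ := h.projects hN
    ⟨_, .app hM hV, .app .refl hUV⟩
  | _, _, _, .closL h, _, _, .clos hs hM =>
    let ⟨_, hv, huv⟩ := h.projects hs
    ⟨_, .clos hv hM, .subst_congr _ huv⟩
  | _, _, _, .closR h, _, _, .clos hs hM =>
    let ⟨_, hV, hUV⟩ := h.projects hM
    ⟨_, .clos hs hV, hUV.subst _⟩
theorem StepSub.projects : ∀ {β : Bool} {s q : Subst}, StepSub β s q →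
    ∀ {Γ Δ : List ℕ} {u : NSub}, TrSub Γ s Δ u → ProjectsSub β Γ q Δ u
  | _, _, _, .ass, _, _, _, .comp hs (.comp hq hr) =>
    .of_eval_eq (.comp (.comp hs hq) hr) (NStepSub.eval_eq .ass)
  | _, _, _, .idR, _, _, _, .comp hs (.id _) => .of_eval_eq hs (NStepSub.eval_eq .idR)
  | _, _, _, .idShift, _, _, _, .comp hid hpi => by
    cases hid
    exact .of_eval_eq hpi (by cases hpi; exact NStepSub.eval_eq .idShift)
  | _, _, _, .consShift, _, _, _, .comp (.cons _ hs _) (.pi _ _) =>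
    .of_eval_eq hs (NStepSub.eval_eq .consShift)
  | _, _, _, .map, _, _, _, .comp hs (.cons _ hq hN) =>
    .of_eval_eq (.cons _ (.comp hs hq) (.clos hs hN)) (NStepSub.eval_eq .map)
  | _, _, _, .consL h, _, _, _, .cons _ hs hN =>
    let ⟨_, hv, huv⟩ := h.projects hs
    ⟨_, .cons _ hv hN, .scons .refl huv⟩
  | _, _, _, .consR h, _, _, _, .cons _ hs hN =>
    let ⟨_, hV, hUV⟩ := h.projects hN
    ⟨_, .cons _ hs hV, .scons hUV fun _ => .refl⟩
  | _, _, _, .compL h, _, _, _, .comp hs hq =>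
    let ⟨_, hv, huv⟩ := h.projects hs
    ⟨_, .comp hv hq, fun _ => .subst_congr _ huv⟩
  | _, _, _, .compR h, _, _, _, .comp hs hq =>
    let ⟨_, hv, huv⟩ := h.projects hq
    ⟨_, .comp hs hv, fun n => (huv n).subst _⟩
end

theorem TrSub.exists_uparrow_eval_eq_var (Γ Δ : List ℕ) (a b : ℕ) :
    ∃ u, TrSub (Δ ++ b :: Γ) (Uparrow Δ (.cons (.pi b) (.var b) a)) (Δ ++ a :: Γ) u ∧
      u.eval = PureTm.var := by
  induction Δ with
  | nil => exact ⟨_, .cons_pi_var Γ a b, NSub.eval_cons_pi_one⟩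
  | cons c Δ ih =>
    obtain ⟨u, hu, hid⟩ := ih
    refine ⟨.cons (.comp .pi u) .one, .cons c (.comp (.pi _ c) hu) (.var _ c), ?_⟩
    rw [NSub.eval_lift, hid, PureTm.up_var]

theorem StepJ.projects {β : Bool} {J K : List ℕ × Tm} (h : StepJ β J K) {U : NTm}
    (hU : TrTm J.1 J.2 U) : ProjectsTm β K.1 K.2 U := by
  cases h with
  | step h => exact h.projects hU
  | @alpha2 Γ Δ a b =>
    obtain ⟨u, hu, hid⟩ := TrSub.exists_uparrow_eval_eq_var Γ Δ a b
    exact .clos_of_eval_eq_var hu hid hU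

theorem ProjectsTm.of_reflTransGen {β : Bool} {J K : List ℕ × Tm}
    (h : Relation.ReflTransGen (StepJ β) J K) {U : NTm} (hU : TrTm J.1 J.2 U) :
    ProjectsTm β K.1 K.2 U := by
  induction h with
  | refl => exact .of_eval_eq hU rfl
  | tail _ h ih =>
    obtain ⟨V, hV, hUV⟩ := ih
    obtain ⟨W, hW, hVW⟩ := h.projects hV
    exact ⟨W, hW, hUV.trans hVW⟩

theorem lpi_projects_to_lsigma_general {β : Bool} {Γ Θ : List ℕ} {M L : Tm} {U V U' V' : NTm}
    (hred : Relation.ReflTransGen (StepJ β) (Γ, M) (Θ, L))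
    (hU : TrTm Γ M U) (hV : TrTm Θ L V)
    (hUU' : Relation.ReflTransGen (NStepTm false) U U')
    (hVV' : Relation.ReflTransGen (NStepTm false) V V') (hV' : ∀ W : NTm, ¬ NStepTm false V' W) :
    Relation.ReflTransGen (NStepTm β) U' V' := by
  obtain ⟨W, hW, hUW⟩ := ProjectsTm.of_reflTransGen hred hU
  obtain rfl : W = V := hW.unique hV
  have hσ : U'.Reduces β U.eval.quote := NTm.Reduces.eval_eq hUU' ▸ U'.reduces_quote_eval.of_sigma
  have hnf : V' = W.eval.quote := NTm.Reduces.eval_eq hVV' ▸ NTm.eq_quote_eval_of_normal hV'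
  exact hnf ▸ hσ.trans hUW.quote

/-- projection of λπ-reductions to λσ: the σ-normal forms of the
translations are related by λσ-reduction. -/
theorem lpi_projects_to_lsigma {Γ Θ : List ℕ} {M L : Tm} {U V : NTm}
    (hred : Relation.ReflTransGen (StepJ true) (Γ, M) (Θ, L))
    (hU : TrTm Γ M U) (hV : TrTm Θ L V) :
    ∀ U' V' : NTm,
      Relation.ReflTransGen (NStepTm false) U U' → (∀ W : NTm, ¬ NStepTm false U' W) →
      Relation.ReflTransGen (NStepTm false) V V' → (∀ W : NTm, ¬ NStepTm false V' W) →
      Relation.ReflTransGen (NStepTm true) U' V' := by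
  exact fun _ _ hUU' _ hVV' hV' => lpi_projects_to_lsigma_general hred hU hV hUU' hVV' hV'
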